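/- Let f : ℝ^m → ℝ and g : ℝ^n → ℝ be quadratic functions (so that H(x,y) = f(x) + g(y) is quadratic), A ∈ ℝ^{m×n}, η > 0, and let z_k = (x_k, y_k) evolve following the alternating method x_{k+1} = x_k − η A ∇g(y_k), y_{k+1} = y_k + η Aᵀ ∇f(x_{k+1}). Then the modified energy H_η(x,y) = f(x) + g(y) − (η/2)⟨∇f(x), A ∇g(y)⟩ is exactly conserved: H_η(z_k) = H_η(z₀) for all k ≥ 0. -/

import Mathlib

open RealInnerProductSpace Matrix

/-- The modified energy `H_η(x, y) = f(x) + g(y) − (η/2)⟨∇f(x), A ∇g(y)⟩`. -/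
noncomputable def modifiedEnergy {m n : ℕ} (f : EuclideanSpace ℝ (Fin m) → ℝ)
    (g : EuclideanSpace ℝ (Fin n) → ℝ) (A : Matrix (Fin m) (Fin n) ℝ) (η : ℝ)
    (x : EuclideanSpace ℝ (Fin m)) (y : EuclideanSpace ℝ (Fin n)) : ℝ :=
  f x + g y - η / 2 * ⟪gradient f x, Matrix.toEuclideanLin A (gradient g y)⟫

/-!
The trapezoidal rule `f x' - f x = ½⟪∇f x + ∇f x', x' - x⟫` is exact for quadratic `f`. With
`x' = x - η A ∇g(y)` it says that the `x`-update merely flips the sign of the correction term: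
`H_η(x, y) = H_{-η}(x', y)`. Exchanging the roles of `x` and `y` replaces `A` by its adjoint, so the
same identity with `-η` for `η` shows that the `y`-update flips the sign back:
`H_{-η}(x', y) = H_η(x', y')`.
-/

open scoped Gradient

/-- Continuous quadratic functions on a real inner product space. The bounded operator `L` need not
be symmetric, so the gradient sees its symmetric part. -/
def IsQuadratic {E : Type*} [NormedAddCommGroup E] [InnerProductSpace ℝ E] (f : E → ℝ) : Prop :=
  ∃ (L : E →L[ℝ] E) (b : E) (c : ℝ), ∀ v, f v = (1 / 2) * ⟪v, L v⟫ + ⟪b, v⟫ + c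

section Hilbert

variable {E F : Type*} [NormedAddCommGroup E] [InnerProductSpace ℝ E] [CompleteSpace E]
  [NormedAddCommGroup F] [InnerProductSpace ℝ F] [CompleteSpace F]

theorem hasGradientAt_quadratic (L : E →L[ℝ] E) (b : E) (c : ℝ) (x : E) :
    HasGradientAt (fun v ↦ (1 / 2) * ⟪v, L v⟫ + ⟪b, v⟫ + c)
      ((1 / 2 : ℝ) • (L x + L.adjoint x) + b) x := by
  have quadratic_part := ((hasFDerivAt_id x).inner ℝ L.hasFDerivAt).const_mul (1 / 2 : ℝ)
  have linear_part := (innerSL ℝ b).hasFDerivAt (x := x)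
  rw [hasGradientAt_iff_hasFDerivAt]
  refine ((quadratic_part.add linear_part).add_const c).congr_fderiv ?_
  ext w
  change (1 / 2) * (⟪x, L w⟫ + ⟪w, L x⟫) + ⟪b, w⟫ = ⟪(1 / 2 : ℝ) • (L x + L.adjoint x) + b, w⟫
  rw [inner_add_left, real_inner_smul_left, inner_add_left, ContinuousLinearMap.adjoint_inner_left,
    real_inner_comm w (L x), add_comm ⟪x, L w⟫]

theorem IsQuadratic.sub_eq_half_inner_gradient_add {f : E → ℝ} (hf : IsQuadratic f) (x x' : E) :
    f x' - f x = (1 / 2) * ⟪∇ f x + ∇ f x', x' - x⟫ := by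
  obtain ⟨L, b, c, hf_eq⟩ := hf
  obtain rfl : f = fun v ↦ (1 / 2) * ⟪v, L v⟫ + ⟪b, v⟫ + c := funext hf_eq
  simp only [(hasGradientAt_quadratic L b c _).gradient, inner_add_left, inner_sub_right,
    real_inner_smul_left, ContinuousLinearMap.adjoint_inner_left, real_inner_comm _ (L _)]
  ring

/-- The modified energy `f x + g y - (η/2)⟪∇f x, A ∇g y⟫` on Hilbert spaces, with a bounded operator
`A` in place of a matrix. -/
noncomputable def hilbertModifiedEnergy (f : E → ℝ) (g : F → ℝ) (A : F →L[ℝ] E) (η : ℝ)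
    (x : E) (y : F) : ℝ :=
  f x + g y - η / 2 * ⟪∇ f x, A (∇ g y)⟫

theorem hilbertModifiedEnergy_adjoint (f : E → ℝ) (g : F → ℝ) (A : F →L[ℝ] E) (η : ℝ)
    (x : E) (y : F) :
    hilbertModifiedEnergy g f A.adjoint η y x = hilbertModifiedEnergy f g A η x y := by
  simp only [hilbertModifiedEnergy, ContinuousLinearMap.adjoint_inner_right, real_inner_comm,
    add_comm]

theorem hilbertModifiedEnergy_neg_sub_smul {f : E → ℝ} (hf : IsQuadratic f) (g : F → ℝ)
    (A : F →L[ℝ] E) (η : ℝ) (x : E) (y : F) :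
    hilbertModifiedEnergy f g A (-η) (x - η • A (∇ g y)) y = hilbertModifiedEnergy f g A η x y := by
  have trapezoid := hf.sub_eq_half_inner_gradient_add x (x - η • A (∇ g y))
  rw [sub_sub_cancel_left, inner_neg_right, real_inner_smul_right, inner_add_left] at trapezoid
  unfold hilbertModifiedEnergy
  linarith

theorem hilbertModifiedEnergy_add_smul_adjoint (f : E → ℝ) {g : F → ℝ} (hg : IsQuadratic g)
    (A : F →L[ℝ] E) (η : ℝ) (x : E) (y : F) :
    hilbertModifiedEnergy f g A η x (y + η • A.adjoint (∇ f x)) =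
      hilbertModifiedEnergy f g A (-η) x y := by
  simpa only [neg_neg, neg_smul, sub_neg_eq_add, hilbertModifiedEnergy_adjoint] using
    hilbertModifiedEnergy_neg_sub_smul hg f A.adjoint (-η) y x

theorem modifiedEnergy_conserved_quadratic_general {f : E → ℝ} {g : F → ℝ}
    (hf : IsQuadratic f) (hg : IsQuadratic g) (A : F →L[ℝ] E) (η : ℝ) (x : ℕ → E) (y : ℕ → F)
    (hx : ∀ k, x (k + 1) = x k - η • A (∇ g (y k)))
    (hy : ∀ k, y (k + 1) = y k + η • A.adjoint (∇ f (x (k + 1)))) (k : ℕ) :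
    hilbertModifiedEnergy f g A η (x k) (y k) = hilbertModifiedEnergy f g A η (x 0) (y 0) := by
  induction k with
  | zero => rfl
  | succ k ih =>
    calc hilbertModifiedEnergy f g A η (x (k + 1)) (y (k + 1))
        = hilbertModifiedEnergy f g A (-η) (x (k + 1)) (y k) := by
          rw [hy, hilbertModifiedEnergy_add_smul_adjoint f hg]
      _ = hilbertModifiedEnergy f g A η (x k) (y k) := by
          rw [hx, hilbertModifiedEnergy_neg_sub_smul hf]
      _ = hilbertModifiedEnergy f g A η (x 0) (y 0) := ih

end Hilbert

theorem adjoint_toContinuousLinearMap_toEuclideanLin {m n : Type*} [Fintype m] [Fintype n]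
    [DecidableEq m] [DecidableEq n] (A : Matrix m n ℝ) :
    (toEuclideanLin A).toContinuousLinearMap.adjoint =
      (toEuclideanLin Aᵀ).toContinuousLinearMap := by
  rw [← conjTranspose_eq_transpose_of_trivial, toEuclideanLin_conjTranspose_eq_adjoint,
    LinearMap.adjoint_toContinuousLinearMap]

/-- **Exact conservation of the modified energy for quadratic energies.**
If `f` and `g` are quadratic, then along the alternating method
`x_{k+1} = x_k − η A ∇g(y_k)`, `y_{k+1} = y_k + η Aᵀ ∇f(x_{k+1})`, the modified energy
`H_η(x, y) = f(x) + g(y) − (η/2)⟨∇f(x), A ∇g(y)⟩` is exactly conserved. -/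
theorem modifiedEnergy_conserved_quadratic {m n : ℕ}
    (f : EuclideanSpace ℝ (Fin m) → ℝ) (g : EuclideanSpace ℝ (Fin n) → ℝ)
    -- `f` and `g` are quadratic functions
    (Lf : EuclideanSpace ℝ (Fin m) →ₗ[ℝ] EuclideanSpace ℝ (Fin m))
    (bf : EuclideanSpace ℝ (Fin m)) (cf : ℝ)
    (hfq : ∀ v, f v = (1/2) * ⟪v, Lf v⟫ + ⟪bf, v⟫ + cf)
    (Lg : EuclideanSpace ℝ (Fin n) →ₗ[ℝ] EuclideanSpace ℝ (Fin n))
    (bg : EuclideanSpace ℝ (Fin n)) (cg : ℝ)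
    (hgq : ∀ v, g v = (1/2) * ⟪v, Lg v⟫ + ⟪bg, v⟫ + cg)
    (A : Matrix (Fin m) (Fin n) ℝ) (η : ℝ) (hη : 0 < η)
    (x : ℕ → EuclideanSpace ℝ (Fin m)) (y : ℕ → EuclideanSpace ℝ (Fin n))
    (hx : ∀ k, x (k+1) = x k - η • Matrix.toEuclideanLin A (gradient g (y k)))
    (hy : ∀ k, y (k+1) = y k + η • Matrix.toEuclideanLin Aᵀ (gradient f (x (k+1)))) :
    ∀ k : ℕ, modifiedEnergy f g A η (x k) (y k) = modifiedEnergy f g A η (x 0) (y 0) := by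
  refine modifiedEnergy_conserved_quadratic_general ⟨Lf.toContinuousLinearMap, bf, cf, hfq⟩
    ⟨Lg.toContinuousLinearMap, bg, cg, hgq⟩ (toEuclideanLin A).toContinuousLinearMap η x y hx ?_
  rwa [adjoint_toContinuousLinearMap_toEuclideanLin]
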